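/- Sobolev embedding for variable-exponent Besov sequence spaces: Let n ∈ ℕ, let p₀, p₁, q ∈ P^{log}(ℝⁿ) and let s₀, s₁ : ℝⁿ → ℝ be locally log-Hölder continuous. Assume s₀(x) ≥ s₁(x) and p₀(x) ≤ p₁(x) for all x ∈ ℝⁿ, and that s₀(x) − n/p₀(x) = s₁(x) − n/p₁(x) for all x ∈ ℝⁿ. Then b^{s₀(·)}_{p₀(·),q(·)}(ℝⁿ) ↪ b^{s₁(·)}_{p₁(·),q(·)}(ℝⁿ): there exists C > 0 such that for every complex-valued sequence γ = (γ_{j,m})_{j∈ℕ₀,m∈ℤⁿ}, ‖γ | b^{s₁(·)}_{p₁(·),q(·)}(ℝⁿ)‖ ≤ C ‖γ | b^{s₀(·)}_{p₀(·),q(·)}(ℝⁿ)‖. -/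

import Mathlib

/-!
The embedding is proved one dyadic level `j` at a time, and pointwise.

Let `f₀` be the level-`j` block with smoothness `s₀`, let `Λ` lie between `2^{-j}` and `2`, and
put `G = f₀ / (μ Λ^{1/q(·)})`, with `p₀`-modular at most one. By log-Hölder continuity, `s₀`,
`1/p₀` and `1/q` oscillate by `O(1/j)` on cubes of side `2^{-j}` (`LocLogHolder.osc`), so that
`2^{j s₀(·)}`, `2^{jn/p₀(·)}` and `Λ^{1/q(·)}` are essentially constant on each cube. Hence so is
`G`, and if `G` were much larger than `2^{jn/p₀(·)}` at one point, it would be so on a whole cube,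
of volume `2^{-jn}`, which contradicts the modular bound; thus `G ≤ C 2^{jn/p₀(·)}`
(`pointwise_bound`). The block with smoothness `s₁` corresponds to `2^{jn(1/p₁ - 1/p₀)} G`, and
with `G ≤ C 2^{jn/p₀(·)}` the inequality `t^{p₁} ≤ t^{p₀}` for `t ≤ 1` bounds its `p₁`-modular by
the `p₀`-modular of `G` (`varModular_embed`, `level_embed`).

If `I_j` is the `j`-th infimum in the mixed modular for `(s₀, p₀)`, with `∑ I_j ≤ 1`, the level
estimate is applied to `Λ_j = I_j + 2^{-j}`, which is admissible and at least `2^{-j}`. It makes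
`Λ_j / 3` admissible for `(s₁, p₁)`, and `∑ Λ_j / 3 ≤ 1`.
-/

open MeasureTheory ENNReal NNReal

noncomputable section

/-- The dyadic cube `Q_{j,m}` in `ℝⁿ`: centered at `2^{-j} m`, with sides parallel to the
coordinate axes and side length `2^{-j}`. -/
def Qcube (n : ℕ) (j : ℕ) (m : Fin n → ℤ) : Set (EuclideanSpace ℝ (Fin n)) :=
  {x | ∀ i, (2 : ℝ) ^ (-(j : ℝ)) * ((m i : ℝ) - 1 / 2) ≤ x i ∧
        x i < (2 : ℝ) ^ (-(j : ℝ)) * ((m i : ℝ) + 1 / 2)}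

/-- A function `g : ℝⁿ → ℝ` is locally log-Hölder continuous if there exists `c > 0` such
that `|g(x) − g(y)| ≤ c / log(e + 1/|x−y|)` for all `x, y ∈ ℝⁿ` (Euclidean distance). -/
def LocLogHolder {n : ℕ} (g : EuclideanSpace ℝ (Fin n) → ℝ) : Prop :=
  ∃ c : ℝ, 0 < c ∧ ∀ x y, |g x - g y| ≤ c / Real.log (Real.exp 1 + 1 / dist x y)

/-- A function `g : ℝⁿ → ℝ` is globally log-Hölder continuous if it is locally log-Hölder
continuous and in addition `|g(x) − g_∞| ≤ c / log(e + |x|)` for some `g_∞` and all `x`. -/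
def GlobLogHolder {n : ℕ} (g : EuclideanSpace ℝ (Fin n) → ℝ) : Prop :=
  LocLogHolder g ∧ ∃ c : ℝ, 0 < c ∧ ∃ g₀ : ℝ, ∀ x, |g x - g₀| ≤ c / Real.log (Real.exp 1 + ‖x‖)

/-- The class `P^{log}(ℝⁿ)` of measurable exponents `p : ℝⁿ → (0,∞]` with `inf p > 0` and
`1/p` globally log-Hölder continuous. -/
def PLog {n : ℕ} (p : EuclideanSpace ℝ (Fin n) → ℝ≥0∞) : Prop :=
  Measurable p ∧ (∃ c : ℝ≥0, 0 < c ∧ ∀ x, (c : ℝ≥0∞) ≤ p x) ∧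
    GlobLogHolder fun x => ((p x)⁻¹).toReal

/-- The modular `ρ_{p(·)}(g) = ∫_{{p<∞}} g(x)^{p(x)} dx + ess sup_{{p=∞}} g` of a
non-negative function `g`, for a variable exponent `p : ℝⁿ → (0,∞]`. -/
def varModular {n : ℕ} (p : EuclideanSpace ℝ (Fin n) → ℝ≥0∞)
    (g : EuclideanSpace ℝ (Fin n) → ℝ≥0∞) : ℝ≥0∞ :=
  (∫⁻ x in {x | p x ≠ ∞}, g x ^ (p x).toReal) + essSup g (volume.restrict {x | p x = ∞})

/-- The Luxemburg (quasi)norm `‖g | L_{p(·)}(ℝⁿ)‖ = inf {λ > 0 : ρ_{p(·)}(g/λ) ≤ 1}`. -/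
def luxNorm {n : ℕ} (p : EuclideanSpace ℝ (Fin n) → ℝ≥0∞)
    (g : EuclideanSpace ℝ (Fin n) → ℝ≥0∞) : ℝ≥0∞ :=
  sInf {lam : ℝ≥0∞ | 0 < lam ∧ varModular p (fun x => g x / lam) ≤ 1}

/-- The mixed modular
`ρ_{ℓ_{q(·)}(L_{p(·)})}((f_ν)) = Σ_ν inf {λ_ν > 0 : ρ_{p(·)}(f_ν / λ_ν^{1/q(·)}) ≤ 1}`,
with the convention `λ^{1/∞} = 1`. -/
def mixedModular {n : ℕ} (q p : EuclideanSpace ℝ (Fin n) → ℝ≥0∞)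
    (f : ℕ → EuclideanSpace ℝ (Fin n) → ℝ≥0∞) : ℝ≥0∞ :=
  ∑' ν : ℕ, sInf {lam : ℝ≥0∞ | 0 < lam ∧
    varModular p (fun x => f ν x / lam ^ ((q x)⁻¹).toReal) ≤ 1}

/-- The `ℓ_{q(·)}(L_{p(·)})` (quasi)norm
`‖(f_ν)‖ = inf {μ > 0 : ρ_{ℓ_{q(·)}(L_{p(·)})}((f_ν/μ)) ≤ 1}`. -/
def ellqLpNorm {n : ℕ} (q p : EuclideanSpace ℝ (Fin n) → ℝ≥0∞)
    (f : ℕ → EuclideanSpace ℝ (Fin n) → ℝ≥0∞) : ℝ≥0∞ :=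
  sInf {mu : ℝ≥0∞ | 0 < mu ∧ mixedModular q p (fun ν x => f ν x / mu) ≤ 1}

/-- The `L_{p(·)}(ℓ_{q(·)})` (quasi)norm: first the pointwise `ℓ_{q(x)}` norm (a supremum
where `q(x) = ∞`), then the `L_{p(·)}` Luxemburg norm. -/
def lpEllqNorm {n : ℕ} (p q : EuclideanSpace ℝ (Fin n) → ℝ≥0∞)
    (f : ℕ → EuclideanSpace ℝ (Fin n) → ℝ≥0∞) : ℝ≥0∞ :=
  luxNorm p fun x =>
    if q x = ∞ then ⨆ ν, f ν x
    else (∑' ν : ℕ, f ν x ^ (q x).toReal) ^ ((q x).toReal)⁻¹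

/-- The building blocks `x ↦ Σ_m |γ_{j,m}| 2^{j s(x)} χ_{j,m}(x)` of the sequence-space
quasinorms. -/
def seqBlocks {n : ℕ} (s : EuclideanSpace ℝ (Fin n) → ℝ) (γ : ℕ → (Fin n → ℤ) → ℂ)
    (j : ℕ) (x : EuclideanSpace ℝ (Fin n)) : ℝ≥0∞ :=
  (2 : ℝ≥0∞) ^ ((j : ℝ) * s x) *
    ∑' m : Fin n → ℤ, (‖γ j m‖₊ : ℝ≥0∞) * (Qcube n j m).indicator (fun _ => (1 : ℝ≥0∞)) x

/-- The Besov sequence quasinorm `‖γ | b^{s(·)}_{p(·),q(·)}(ℝⁿ)‖`. -/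
def bVarNorm (n : ℕ) (s : EuclideanSpace ℝ (Fin n) → ℝ)
    (p q : EuclideanSpace ℝ (Fin n) → ℝ≥0∞) (γ : ℕ → (Fin n → ℤ) → ℂ) : ℝ≥0∞ :=
  ellqLpNorm q p (seqBlocks s γ)

/-- The Triebel–Lizorkin sequence quasinorm `‖γ | f^{s(·)}_{p(·),q(·)}(ℝⁿ)‖`. -/
def fVarNorm (n : ℕ) (s : EuclideanSpace ℝ (Fin n) → ℝ)
    (p q : EuclideanSpace ℝ (Fin n) → ℝ≥0∞) (γ : ℕ → (Fin n → ℤ) → ℂ) : ℝ≥0∞ :=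
  lpEllqNorm p q (seqBlocks s γ)

/-! ### Dyadic cubes -/

/-- The cube of level `j` containing `x` is found by rounding the coordinates of `2^j x`. -/
lemma mem_Qcube_iff {n j : ℕ} {m : Fin n → ℤ} {x : EuclideanSpace ℝ (Fin n)} :
    x ∈ Qcube n j m ↔ ∀ i, m i = ⌊(2 : ℝ) ^ (j : ℝ) * x i + 1 / 2⌋ := by
  have hpos : (0 : ℝ) < (2 : ℝ) ^ (j : ℝ) := by positivity
  have hinv : (2 : ℝ) ^ (-(j : ℝ)) = ((2 : ℝ) ^ (j : ℝ))⁻¹ := Real.rpow_neg (by norm_num) _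
  unfold Qcube
  simp only [Set.mem_ofPred_eq]
  refine forall_congr' fun i => ?_
  rw [eq_comm, Int.floor_eq_iff, hinv, inv_mul_le_iff₀ hpos, lt_inv_mul_iff₀ hpos]
  constructor <;> rintro ⟨h1, h2⟩ <;> constructor <;> linarith

lemma exists_mem_Qcube {n : ℕ} (j : ℕ) (x : EuclideanSpace ℝ (Fin n)) :
    ∃ m, x ∈ Qcube n j m :=
  ⟨_, mem_Qcube_iff.2 fun _ => rfl⟩

/-- Cubes of one level are pairwise disjoint, so points of one cube belong to the same cubes. -/
lemma mem_Qcube_congr {n j : ℕ} {m m' : Fin n → ℤ} {x y : EuclideanSpace ℝ (Fin n)}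
    (hx : x ∈ Qcube n j m) (hy : y ∈ Qcube n j m) : x ∈ Qcube n j m' ↔ y ∈ Qcube n j m' := by
  rw [mem_Qcube_iff] at hx hy
  rw [mem_Qcube_iff, mem_Qcube_iff]
  simp only [← hx, ← hy]

lemma Qcube_eq_preimage (n j : ℕ) (m : Fin n → ℤ) :
    Qcube n j m = (MeasurableEquiv.toLp 2 (Fin n → ℝ)).symm ⁻¹' (Set.univ.pi fun i =>
      Set.Ico ((2 : ℝ) ^ (-(j : ℝ)) * ((m i : ℝ) - 1 / 2))
        ((2 : ℝ) ^ (-(j : ℝ)) * ((m i : ℝ) + 1 / 2))) := by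
  ext x
  simp [Qcube, Set.mem_pi]

lemma measurableSet_Qcube (n j : ℕ) (m : Fin n → ℤ) : MeasurableSet (Qcube n j m) := by
  rw [Qcube_eq_preimage]
  exact (MeasurableEquiv.measurable _)
    (MeasurableSet.univ_pi fun _ => measurableSet_Ico)

lemma volume_Qcube (n j : ℕ) (m : Fin n → ℤ) :
    volume (Qcube n j m) = (2 : ℝ≥0∞) ^ (-((j : ℝ) * n)) := by
  rw [Qcube_eq_preimage,
    (EuclideanSpace.volume_preserving_symm_measurableEquiv_toLp (Fin n)).measure_preimage
      (MeasurableSet.univ_pi fun _ => measurableSet_Ico).nullMeasurableSet, Real.volume_pi_Ico]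
  have : ∀ i : Fin n, ENNReal.ofReal ((2 : ℝ) ^ (-(j : ℝ)) * ((m i : ℝ) + 1 / 2) -
      (2 : ℝ) ^ (-(j : ℝ)) * ((m i : ℝ) - 1 / 2)) = (2 : ℝ≥0∞) ^ (-(j : ℝ)) := by
    intro i
    rw [← mul_sub, show (m i : ℝ) + 1 / 2 - ((m i : ℝ) - 1 / 2) = 1 by ring, mul_one,
      ← ENNReal.ofReal_rpow_of_pos (by norm_num)]
    simp
  rw [Finset.prod_congr rfl fun i _ => this i]
  simp only [Finset.prod_const, Finset.card_univ, Fintype.card_fin]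
  rw [← ENNReal.rpow_natCast, ← ENNReal.rpow_mul, neg_mul]

lemma dist_le_of_mem_Qcube {n j : ℕ} {m : Fin n → ℤ} {x y : EuclideanSpace ℝ (Fin n)}
    (hx : x ∈ Qcube n j m) (hy : y ∈ Qcube n j m) :
    dist x y ≤ n * (2 : ℝ) ^ (-(j : ℝ)) := by
  have hpos : (0 : ℝ) < (2 : ℝ) ^ (-(j : ℝ)) := by positivity
  rw [EuclideanSpace.dist_eq]
  refine Real.sqrt_le_iff.2 ⟨by positivity, ?_⟩
  calc ∑ i, dist (x i) (y i) ^ 2 ≤ ∑ _i : Fin n, ((2 : ℝ) ^ (-(j : ℝ))) ^ 2 := by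
        refine Finset.sum_le_sum fun i _ => pow_le_pow_left₀ dist_nonneg ?_ 2
        have h1 := hx i
        have h2 := hy i
        rw [Real.dist_eq, abs_le]
        constructor <;> nlinarith
    _ = n * ((2 : ℝ) ^ (-(j : ℝ))) ^ 2 := by simp
    _ ≤ (n * (2 : ℝ) ^ (-(j : ℝ))) ^ 2 := by
        rw [mul_pow]
        gcongr
        exact_mod_cast Nat.le_self_pow two_ne_zero n

/-! ### Log-Hölder continuity on cubes -/

/-- A locally log-Hölder function oscillates by at most a constant times `1 / j` on cubes of
level `j`; this is the only way log-Hölder continuity enters. -/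
lemma LocLogHolder.osc {n : ℕ} (hn : 0 < n) {g : EuclideanSpace ℝ (Fin n) → ℝ}
    (hg : LocLogHolder g) : ∃ c : ℝ, 0 ≤ c ∧ ∀ (j : ℕ) (m : Fin n → ℤ) (x y),
      x ∈ Qcube n j m → y ∈ Qcube n j m → j * |g x - g y| ≤ c := by
  obtain ⟨c, hc, h⟩ := hg
  have hn1 : (1 : ℝ) ≤ n := by exact_mod_cast hn
  have hlogn : 0 ≤ Real.log n := Real.log_nonneg hn1
  have hlog2 : 0 < Real.log 2 := Real.log_pos (by norm_num)
  refine ⟨c * (Real.log n + 1) / Real.log 2, by positivity, fun j m x y hx hy => ?_⟩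
  rcases eq_or_ne x y with rfl | hxy
  · simp only [sub_self, abs_zero, mul_zero]
    positivity
  have hd : 0 < dist x y := dist_pos.2 hxy
  have hd' := dist_le_of_mem_Qcube hx hy
  have h2j : (0 : ℝ) < (2 : ℝ) ^ (j : ℝ) := by positivity
  set A := Real.exp 1 + 1 / dist x y with hA
  have hA1 : Real.exp 1 ≤ A := by
    have : 0 < 1 / dist x y := by positivity
    linarith
  have hA0 : 0 < A := (Real.exp_pos 1).trans_le hA1
  have hL1 : 1 ≤ Real.log A := (Real.le_log_iff_exp_le hA0).2 hA1
  have hA2 : (2 : ℝ) ^ (j : ℝ) ≤ n * A := by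
    rw [Real.rpow_neg (by norm_num), ← div_eq_mul_inv, le_div_iff₀ h2j] at hd'
    have : (2 : ℝ) ^ (j : ℝ) ≤ n * (1 / dist x y) := by
      rw [mul_one_div, le_div_iff₀ hd]
      linarith
    have : (0 : ℝ) ≤ n * Real.exp 1 := by positivity
    rw [hA]
    linarith
  have hj : j * Real.log 2 ≤ (Real.log n + 1) * Real.log A := by
    have := Real.log_le_log h2j hA2
    rw [Real.log_rpow (by norm_num), Real.log_mul (by positivity) hA0.ne'] at this
    nlinarith
  rw [le_div_iff₀ hlog2]
  calc j * |g x - g y| * Real.log 2 = (j * Real.log 2) * |g x - g y| := by ring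
    _ ≤ ((Real.log n + 1) * Real.log A) * (c / Real.log A) := by
        gcongr
        exact h x y
    _ = c * (Real.log n + 1) := by
        field_simp

lemma two_rpow_le {a b K : ℝ} (h : |a - b| ≤ K) :
    (2 : ℝ≥0∞) ^ a ≤ 2 ^ K * 2 ^ b := by
  rw [← ENNReal.rpow_add _ _ (by norm_num) (by norm_num)]
  exact ENNReal.rpow_le_rpow_of_exponent_le (by norm_num) (by linarith [(abs_le.1 h).2])

lemma rpow_mul_inv_toReal {p : ℝ≥0∞} {c : ℝ≥0} (hc : 0 < c) (hcp : c ≤ p) (hp : p ≠ ∞) (a : ℝ) :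
    ((2 : ℝ≥0∞) ^ (a * (p⁻¹).toReal)) ^ p.toReal = 2 ^ a := by
  have h0 : p ≠ 0 := fun h => by simp [h] at hcp; exact hc.ne' hcp
  have : 0 < p.toReal := ENNReal.toReal_pos h0 hp
  rw [← ENNReal.rpow_mul, ENNReal.toReal_inv, mul_assoc, inv_mul_cancel₀ this.ne', mul_one]

/-! ### The estimate at a single level -/

/-- The pointwise estimate behind the embedding: a function `G` of modular at most one that is
essentially constant on the cubes of level `j` satisfies `G ≤ C 2^{jn/p(·)}` everywhere.
Otherwise `G` would exceed `2 · 2^{jn/p(·)}` on a whole cube, whose volume is `2^{-jn}`. -/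
lemma pointwise_bound {n j : ℕ} {p : EuclideanSpace ℝ (Fin n) → ℝ≥0∞} (hpm : Measurable p)
    {c : ℝ≥0} (hc : 0 < c) (hcp : ∀ x, c ≤ p x) {K L : ℝ≥0∞} (hK0 : K ≠ 0) (hK : K ≠ ∞)
    {G : EuclideanSpace ℝ (Fin n) → ℝ≥0∞}
    (hG : ∀ m, ∀ x ∈ Qcube n j m, ∀ y ∈ Qcube n j m, G x ≤ K * G y)
    (hw : ∀ m, ∀ x ∈ Qcube n j m, ∀ y ∈ Qcube n j m,
      (2 : ℝ≥0∞) ^ ((j : ℝ) * n * ((p x)⁻¹).toReal) ≤ L * 2 ^ ((j : ℝ) * n * ((p y)⁻¹).toReal))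
    (hmod : varModular p G ≤ 1) (x : EuclideanSpace ℝ (Fin n)) :
    G x ≤ K * (2 * L) * 2 ^ ((j : ℝ) * n * ((p x)⁻¹).toReal) := by
  by_contra! hx
  obtain ⟨m, hm⟩ := exists_mem_Qcube j x
  have key : ∀ y ∈ Qcube n j m, 2 * (2 : ℝ≥0∞) ^ ((j : ℝ) * n * ((p y)⁻¹).toReal) ≤ G y := by
    intro y hy
    have h1 := hx.trans_le (hG m x hm y hy)
    rw [mul_assoc K] at h1
    have h2 := (ENNReal.mul_lt_mul_iff_right hK0 hK).1 h1
    refine le_trans ?_ h2.le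
    rw [mul_assoc 2 L]
    exact mul_le_mul_right (hw m y hy x hm) 2
  have hS : MeasurableSet {x | p x = ∞} := hpm (measurableSet_singleton _)
  have hS' : MeasurableSet {x | p x ≠ ∞} := hS.compl
  have hess : essSup G (volume.restrict {x | p x = ∞}) ≤ 1 := le_trans le_add_self hmod
  have hint : ∫⁻ x in {x | p x ≠ ∞}, G x ^ (p x).toReal ≤ 1 := le_trans le_self_add hmod
  have hnull : volume (Qcube n j m ∩ {x | p x = ∞}) = 0 := by
    have h1 : ∀ᵐ y ∂(volume.restrict {x | p x = ∞}), G y ≤ 1 := by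
      filter_upwards [ENNReal.ae_le_essSup G] with y hy using hy.trans hess
    rw [ae_restrict_iff' hS] at h1
    refine measure_mono_null (fun y hy => ?_) h1
    simp only [Set.mem_ofPred_eq, Set.mem_compl_iff]
    intro h
    have h2 := (key y hy.1).trans (h hy.2)
    have hy2 : p y = ∞ := hy.2
    simp [hy2] at h2
  have hvol : volume (Qcube n j m ∩ {x | p x ≠ ∞}) = (2 : ℝ≥0∞) ^ (-((j : ℝ) * n)) := by
    rw [← volume_Qcube n j m, ← measure_inter_add_sdiff (Qcube n j m) hS, hnull, zero_add]
    rfl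
  have hlow : (2 : ℝ≥0∞) ^ (c : ℝ) ≤ 1 := by
    calc (2 : ℝ≥0∞) ^ (c : ℝ)
        = 2 ^ (c : ℝ) * 2 ^ ((j : ℝ) * n) * volume (Qcube n j m ∩ {x | p x ≠ ∞}) := by
          rw [hvol, mul_assoc, ← ENNReal.rpow_add _ _ (by norm_num) (by norm_num),
            add_neg_cancel, ENNReal.rpow_zero, mul_one]
      _ = ∫⁻ _ in Qcube n j m ∩ {x | p x ≠ ∞}, 2 ^ (c : ℝ) * 2 ^ ((j : ℝ) * n) := by
          rw [setLIntegral_const]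
      _ ≤ ∫⁻ y in Qcube n j m ∩ {x | p x ≠ ∞}, G y ^ (p y).toReal := by
          refine setLIntegral_mono' ((measurableSet_Qcube n j m).inter hS') fun y hy => ?_
          have hc' : (c : ℝ) ≤ (p y).toReal := by
            simpa using ENNReal.toReal_mono hy.2 (hcp y)
          calc (2 : ℝ≥0∞) ^ (c : ℝ) * 2 ^ ((j : ℝ) * n)
              ≤ 2 ^ (p y).toReal * 2 ^ ((j : ℝ) * n) := by
                gcongr
                norm_num
            _ = (2 * 2 ^ ((j : ℝ) * n * ((p y)⁻¹).toReal)) ^ (p y).toReal := by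
                rw [ENNReal.mul_rpow_of_nonneg _ _ ENNReal.toReal_nonneg,
                  rpow_mul_inv_toReal hc (hcp y) hy.2]
            _ ≤ _ := ENNReal.rpow_le_rpow (key y hy.1) ENNReal.toReal_nonneg
      _ ≤ ∫⁻ y in {x | p x ≠ ∞}, G y ^ (p y).toReal := lintegral_mono_set Set.inter_subset_right
      _ ≤ 1 := hint
  exact absurd hlow (not_le.2 (ENNReal.one_lt_rpow (by norm_num) (by exact_mod_cast hc)))

/-- Raising the integrability from `p₀` to `p₁` at a single level: once `G ≤ N 2^{jn/p₀(·)}`,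
the function `2^{jn(1/p₁ - 1/p₀)} G` divided by a large constant has `p₁`-modular at most one,
because `t^{p₁} ≤ t^{p₀}` for `t ≤ 1`. -/
lemma varModular_embed {n j : ℕ} {p₀ p₁ : EuclideanSpace ℝ (Fin n) → ℝ≥0∞}
    (hp₁ : Measurable p₁) (hp : ∀ x, p₀ x ≤ p₁ x)
    {c : ℝ≥0} (hc : 0 < c) (hcp : ∀ x, c ≤ p₀ x) {N : ℝ≥0∞} (hN1 : 1 ≤ N) (hN : N ≠ ∞)
    {G H : EuclideanSpace ℝ (Fin n) → ℝ≥0∞}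
    (hG : ∀ x, G x ≤ N * 2 ^ ((j : ℝ) * n * ((p₀ x)⁻¹).toReal))
    (hmod : varModular p₀ G ≤ 1)
    (hH : ∀ x, H x ≤ (2 ^ (1 + (c : ℝ)⁻¹) * N)⁻¹ * G x *
      (2 ^ ((j : ℝ) * n * ((p₀ x)⁻¹).toReal))⁻¹ * 2 ^ ((j : ℝ) * n * ((p₁ x)⁻¹).toReal)) :
    varModular p₁ H ≤ 1 := by
  set T : ℝ≥0∞ := 2 ^ (1 + (c : ℝ)⁻¹) with hT
  have hc' : (0 : ℝ) < c := hc
  have hN0 : N ≠ 0 := (zero_lt_one.trans_le hN1).ne'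
  have hT0 : T ≠ 0 := by simp [hT]
  have hTt : T ≠ ∞ := by simp [hT]
  have hT2 : 2 ≤ T := by
    calc (2 : ℝ≥0∞) = 2 ^ (1 : ℝ) := by simp
      _ ≤ T := ENNReal.rpow_le_rpow_of_exponent_le (by norm_num)
        (by have := inv_pos.2 hc'; linarith)
  have hTc : 2 ≤ T ^ (c : ℝ) := by
    calc (2 : ℝ≥0∞) = 2 ^ (1 : ℝ) := by simp
      _ ≤ 2 ^ ((1 + (c : ℝ)⁻¹) * c) := ENNReal.rpow_le_rpow_of_exponent_le (by norm_num)
        (by rw [add_mul, inv_mul_cancel₀ hc'.ne']; linarith)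
      _ = T ^ (c : ℝ) := by rw [hT, ENNReal.rpow_mul]
  have hw0 : ∀ a : ℝ, (2 : ℝ≥0∞) ^ a ≠ 0 := fun a => by simp
  have hwt : ∀ a : ℝ, (2 : ℝ≥0∞) ^ a ≠ ∞ := fun a => by simp
  set F : EuclideanSpace ℝ (Fin n) → ℝ≥0∞ :=
    fun x => (T * N)⁻¹ * G x * (2 ^ ((j : ℝ) * n * ((p₀ x)⁻¹).toReal))⁻¹ with hF
  have hF2 : ∀ x, F x ≤ 2⁻¹ := by
    intro x
    have hw := hw0 ((j : ℝ) * n * ((p₀ x)⁻¹).toReal)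
    have hw' := hwt ((j : ℝ) * n * ((p₀ x)⁻¹).toReal)
    have h := hG x
    simp only [hF]
    set w : ℝ≥0∞ := 2 ^ ((j : ℝ) * n * ((p₀ x)⁻¹).toReal)
    rw [ENNReal.mul_inv (Or.inl hT0) (Or.inl hTt)]
    calc T⁻¹ * N⁻¹ * G x * w⁻¹ ≤ T⁻¹ * N⁻¹ * (N * w) * w⁻¹ := by gcongr
      _ = T⁻¹ * ((N⁻¹ * N) * (w * w⁻¹)) := by ring
      _ = T⁻¹ := by rw [ENNReal.inv_mul_cancel hN0 hN, ENNReal.mul_inv_cancel hw hw']; simp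
      _ ≤ 2⁻¹ := ENNReal.inv_le_inv.2 hT2
  have hint : ∫⁻ x in {x | p₁ x ≠ ∞}, H x ^ (p₁ x).toReal ≤ 2⁻¹ := by
    have hS : MeasurableSet {x | p₁ x ≠ ∞} := (hp₁ (measurableSet_singleton ∞)).compl
    calc ∫⁻ x in {x | p₁ x ≠ ∞}, H x ^ (p₁ x).toReal
        ≤ ∫⁻ x in {x | p₁ x ≠ ∞}, 2⁻¹ * G x ^ (p₀ x).toReal := by
          refine setLIntegral_mono' hS fun x hx => ?_
          have hx1 : p₁ x ≠ ∞ := hx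
          have hx0 : p₀ x ≠ ∞ := ne_top_of_le_ne_top hx1 (hp x)
          have hle : (p₀ x).toReal ≤ (p₁ x).toReal := ENNReal.toReal_mono hx1 (hp x)
          have hcle : (c : ℝ) ≤ (p₀ x).toReal := by
            simpa using ENNReal.toReal_mono hx0 (hcp x)
          have hF1 : F x ≤ 1 := (hF2 x).trans (by simp)
          have hT1 : T ^ (c : ℝ) ≤ (T * N) ^ (p₀ x).toReal := by
            calc T ^ (c : ℝ) ≤ T ^ (p₀ x).toReal :=
                  ENNReal.rpow_le_rpow_of_exponent_le (le_trans (by norm_num) hT2) hcle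
              _ ≤ (T * N) ^ (p₀ x).toReal :=
                  ENNReal.rpow_le_rpow (le_mul_of_one_le_right' hN1) ENNReal.toReal_nonneg
          calc H x ^ (p₁ x).toReal
              ≤ (F x * 2 ^ ((j : ℝ) * n * ((p₁ x)⁻¹).toReal)) ^ (p₁ x).toReal :=
                ENNReal.rpow_le_rpow (hH x) ENNReal.toReal_nonneg
            _ = F x ^ (p₁ x).toReal * 2 ^ ((j : ℝ) * n) := by
                rw [ENNReal.mul_rpow_of_nonneg _ _ ENNReal.toReal_nonneg,
                  rpow_mul_inv_toReal hc ((hcp x).trans (hp x)) hx1]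
            _ ≤ F x ^ (p₀ x).toReal * 2 ^ ((j : ℝ) * n) := by
                gcongr ?_ * _
                exact ENNReal.rpow_le_rpow_of_exponent_ge hF1 hle
            _ = ((T * N) ^ (p₀ x).toReal)⁻¹ * G x ^ (p₀ x).toReal *
                  ((2 ^ ((j : ℝ) * n))⁻¹ * 2 ^ ((j : ℝ) * n)) := by
                rw [hF]
                simp only
                rw [ENNReal.mul_rpow_of_nonneg _ _ ENNReal.toReal_nonneg,
                  ENNReal.mul_rpow_of_nonneg _ _ ENNReal.toReal_nonneg, ENNReal.inv_rpow,
                  ENNReal.inv_rpow, rpow_mul_inv_toReal hc (hcp x) hx0, mul_assoc]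
            _ = ((T * N) ^ (p₀ x).toReal)⁻¹ * G x ^ (p₀ x).toReal := by
                rw [ENNReal.inv_mul_cancel (hw0 _) (hwt _), mul_one]
            _ ≤ 2⁻¹ * G x ^ (p₀ x).toReal := by
                gcongr
                exact hTc.trans hT1
      _ ≤ ∫⁻ x in {x | p₀ x ≠ ∞}, 2⁻¹ * G x ^ (p₀ x).toReal :=
          lintegral_mono_set fun x hx => ne_top_of_le_ne_top hx (hp x)
      _ = 2⁻¹ * ∫⁻ x in {x | p₀ x ≠ ∞}, G x ^ (p₀ x).toReal :=
          lintegral_const_mul' _ _ (by simp)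
      _ ≤ 2⁻¹ * 1 := by
          gcongr
          exact le_trans le_self_add hmod
      _ = 2⁻¹ := mul_one _
  have hess : essSup H (volume.restrict {x | p₁ x = ∞}) ≤ 2⁻¹ := by
    refine essSup_le_of_ae_le _ ?_
    refine (ae_restrict_iff' (hp₁ (measurableSet_singleton ∞))).2 (ae_of_all _ fun x hx => ?_)
    have hx : p₁ x = ∞ := hx
    refine (hH x).trans ?_
    have h1 := hF2 x
    simp only [hF] at h1
    simpa only [hx, ENNReal.inv_top, ENNReal.toReal_zero, mul_zero, ENNReal.rpow_zero, mul_one]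
      using h1
  calc varModular p₁ H ≤ 2⁻¹ + 2⁻¹ := add_le_add hint hess
    _ = 1 := ENNReal.inv_two_add_inv_two

lemma varModular_mono {n : ℕ} (p : EuclideanSpace ℝ (Fin n) → ℝ≥0∞)
    {g h : EuclideanSpace ℝ (Fin n) → ℝ≥0∞} (hgh : ∀ x, g x ≤ h x) :
    varModular p g ≤ varModular p h := by
  unfold varModular
  gcongr with x
  · exact hgh x
  · exact essSup_mono_ae (ae_of_all _ hgh)

lemma seqBlocks_const {n : ℕ} (γ : ℕ → (Fin n → ℤ) → ℂ) {j : ℕ} {m : Fin n → ℤ}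
    {x y : EuclideanSpace ℝ (Fin n)} (hx : x ∈ Qcube n j m) (hy : y ∈ Qcube n j m) :
    (∑' m : Fin n → ℤ, (‖γ j m‖₊ : ℝ≥0∞) * (Qcube n j m).indicator (fun _ => (1 : ℝ≥0∞)) x) =
      ∑' m : Fin n → ℤ, (‖γ j m‖₊ : ℝ≥0∞) * (Qcube n j m).indicator (fun _ => (1 : ℝ≥0∞)) y := by
  refine tsum_congr fun m' => ?_
  have h := mem_Qcube_congr (m' := m') hx hy
  by_cases hxm : x ∈ Qcube n j m'
  · rw [Set.indicator_of_mem hxm, Set.indicator_of_mem (h.1 hxm)]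
  · rw [Set.indicator_of_notMem hxm, Set.indicator_of_notMem fun hym => hxm (h.2 hym)]

/-- The single-level estimate. Since `lam` lies between `2^{-j}` and `2`, the factor
`lam^{1/q(·)}` is comparable to a constant on each cube of level `j`. The passage from `lam`
to `lam / 3` in the conclusion makes room for the correction `2^{-j}` when summing over levels. -/
lemma level_embed (n : ℕ) (hn : 0 < n)
    (p₀ p₁ q : EuclideanSpace ℝ (Fin n) → ℝ≥0∞)
    (s₀ s₁ : EuclideanSpace ℝ (Fin n) → ℝ)
    (hp₀ : PLog p₀) (hp₁ : PLog p₁) (hq : PLog q)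
    (hs₀ : LocLogHolder s₀) (hp : ∀ x, p₀ x ≤ p₁ x)
    (hsobolev : ∀ x, s₀ x - n * ((p₀ x)⁻¹).toReal = s₁ x - n * ((p₁ x)⁻¹).toReal) :
    ∃ C : ℝ≥0, 0 < C ∧ ∀ (γ : ℕ → (Fin n → ℤ) → ℂ) (j : ℕ) (mu lam : ℝ≥0∞), mu ≠ 0 → mu ≠ ∞ →
      2 ^ (-(j : ℝ)) ≤ lam → lam ≤ 2 →
      varModular p₀ (fun x => seqBlocks s₀ γ j x / mu / lam ^ ((q x)⁻¹).toReal) ≤ 1 →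
      varModular p₁ (fun x => seqBlocks s₁ γ j x / (C * mu) /
        (lam / 3) ^ ((q x)⁻¹).toReal) ≤ 1 := by
  obtain ⟨hp₀m, ⟨c, hc, hcp⟩, hp₀l, -⟩ := hp₀
  obtain ⟨-, ⟨cq, hcq, hcqq⟩, hql, -⟩ := hq
  obtain ⟨A, hA0, hA⟩ := hs₀.osc hn
  obtain ⟨B, hB0, hB⟩ := hp₀l.osc hn
  obtain ⟨D, hD0, hD⟩ := hql.osc hn
  set R : ℝ := (cq : ℝ)⁻¹ with hR
  have hR0 : 0 ≤ R := by positivity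
  have hr : ∀ x, ((q x)⁻¹).toReal ≤ R := by
    intro x
    have h1 : (q x)⁻¹ ≤ (cq : ℝ≥0∞)⁻¹ := ENNReal.inv_le_inv.2 (hcqq x)
    simpa using ENNReal.toReal_mono (by simpa using hcq.ne') h1
  have hr0 : ∀ x, 0 ≤ ((q x)⁻¹).toReal := fun x => ENNReal.toReal_nonneg
  set K : ℝ≥0∞ := 2 ^ (A + D + R) with hK
  set L : ℝ≥0∞ := 2 ^ (n * B) with hL
  have h2 : ∀ a : ℝ, 0 ≤ a → 1 ≤ (2 : ℝ≥0∞) ^ a := fun a ha =>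
    (ENNReal.rpow_zero (x := 2)).ge.trans
      (ENNReal.rpow_le_rpow_of_exponent_le (by norm_num) ha)
  have hN1 : 1 ≤ K * (2 * L) := by
    have h1 : 1 ≤ K := h2 _ (by positivity)
    have h3 : 1 ≤ L := h2 _ (by positivity)
    exact one_le_mul h1 (one_le_mul (by norm_num) h3)
  have hNt : K * (2 * L) ≠ ∞ := by
    simp [hK, hL, ENNReal.mul_eq_top]
  set M : ℝ≥0∞ := 2 ^ (1 + (c : ℝ)⁻¹) * (K * (2 * L)) with hM
  have hMt : M ≠ ∞ := ENNReal.mul_ne_top (by simp) hNt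
  have hM0 : M ≠ 0 := mul_ne_zero (by simp) (zero_lt_one.trans_le hN1).ne'
  set C : ℝ≥0∞ := M * 3 ^ R with hC
  have hCt : C ≠ ∞ := ENNReal.mul_ne_top hMt (by simp)
  have hC0 : C ≠ 0 := mul_ne_zero hM0 (by simp)
  refine ⟨C.toNNReal, ENNReal.toNNReal_pos hC0 hCt, ?_⟩
  intro γ j mu lam hmu hmut hlam1 hlam2 hmod
  rw [ENNReal.coe_toNNReal hCt]
  have hlam0 : lam ≠ 0 := fun h => by simp [h] at hlam1
  have hlamt : lam ≠ ∞ := fun h => by simp [h] at hlam2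
  -- `lam = 2 ^ t` with `-j ≤ t ≤ 1`
  obtain ⟨t, ht⟩ : ∃ t : ℝ, lam = 2 ^ t := by
    have hpos : 0 < lam.toReal := ENNReal.toReal_pos hlam0 hlamt
    refine ⟨Real.logb 2 lam.toReal, ?_⟩
    have := Real.rpow_logb (b := 2) (by norm_num) (by norm_num) hpos
    conv_lhs => rw [← ENNReal.ofReal_toReal hlamt, ← this]
    rw [← ENNReal.ofReal_rpow_of_pos (by norm_num)]
    simp
  have ht1 : -(j : ℝ) ≤ t := by
    rw [ht] at hlam1
    by_contra! h
    exact absurd hlam1 (not_le.2 (ENNReal.rpow_lt_rpow_of_exponent_lt (by norm_num) (by simp) h))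
  have ht2 : t ≤ 1 := by
    by_contra! h
    have h3 := ENNReal.rpow_lt_rpow_of_exponent_lt (x := 2) (by norm_num) (by simp) h
    rw [← ht, ENNReal.rpow_one] at h3
    exact absurd hlam2 (not_le.2 h3)
  have htj : |t| ≤ j + 1 := by
    have : (0 : ℝ) ≤ j := by positivity
    rw [abs_le]
    constructor <;> linarith
  set a : EuclideanSpace ℝ (Fin n) → ℝ≥0∞ := fun x => ∑' m : Fin n → ℤ, (‖γ j m‖₊ : ℝ≥0∞) *
    (Qcube n j m).indicator (fun _ => (1 : ℝ≥0∞)) x with ha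
  have hG' : ∀ x, seqBlocks s₀ γ j x / mu / lam ^ ((q x)⁻¹).toReal =
      2 ^ (j * s₀ x - t * ((q x)⁻¹).toReal) * (a x / mu) := by
    intro x
    rw [ht, ← ENNReal.rpow_mul, sub_eq_add_neg, ENNReal.rpow_add _ _ (by norm_num) (by norm_num),
      ENNReal.rpow_neg]
    simp only [seqBlocks, div_eq_mul_inv, ha]
    ring
  have hosc : ∀ m, ∀ x ∈ Qcube n j m, ∀ y ∈ Qcube n j m,
      seqBlocks s₀ γ j x / mu / lam ^ ((q x)⁻¹).toReal ≤
        K * (seqBlocks s₀ γ j y / mu / lam ^ ((q y)⁻¹).toReal) := by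
    intro m x hx y hy
    have hax : a x = a y := seqBlocks_const γ hx hy
    rw [hG', hG', hax, ← mul_assoc]
    gcongr
    refine two_rpow_le ?_
    have h1 := hA j m x y hx hy
    have h3 := hD j m x y hx hy
    have h4 : |((q x)⁻¹).toReal - ((q y)⁻¹).toReal| ≤ R := by
      rw [abs_le]
      constructor <;> linarith [hr x, hr y, hr0 x, hr0 y]
    have h5 : |t| * |((q x)⁻¹).toReal - ((q y)⁻¹).toReal| ≤ D + R := by
      calc _ ≤ ((j : ℝ) + 1) * |((q x)⁻¹).toReal - ((q y)⁻¹).toReal| := by gcongr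
        _ ≤ D + R := by linarith
    calc _ = |(j : ℝ) * (s₀ x - s₀ y) - t * (((q x)⁻¹).toReal - ((q y)⁻¹).toReal)| := by
          congr 1
          ring
      _ ≤ |(j : ℝ) * (s₀ x - s₀ y)| + |t * (((q x)⁻¹).toReal - ((q y)⁻¹).toReal)| :=
          abs_sub _ _
      _ = j * |s₀ x - s₀ y| + |t| * |((q x)⁻¹).toReal - ((q y)⁻¹).toReal| := by
          rw [abs_mul, abs_mul, Nat.abs_cast]
      _ ≤ A + D + R := by linarith
  have hwosc : ∀ m, ∀ x ∈ Qcube n j m, ∀ y ∈ Qcube n j m,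
      (2 : ℝ≥0∞) ^ ((j : ℝ) * n * ((p₀ x)⁻¹).toReal) ≤
        L * 2 ^ ((j : ℝ) * n * ((p₀ y)⁻¹).toReal) := by
    intro m x hx y hy
    refine two_rpow_le ?_
    have h1 := hB j m x y hx hy
    rw [← mul_sub, abs_mul, abs_mul, Nat.abs_cast, Nat.abs_cast]
    calc _ = (n : ℝ) * (j * |((p₀ x)⁻¹).toReal - ((p₀ y)⁻¹).toReal|) := by ring
      _ ≤ n * B := by gcongr
  have hbd := pointwise_bound hp₀m hc hcp (by simp [hK]) (by simp [hK]) hosc hwosc hmod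
  refine varModular_embed hp₁.1 hp hc hcp hN1 hNt hbd hmod fun x => ?_
  have hs1 : (2 : ℝ≥0∞) ^ ((j : ℝ) * s₁ x) = 2 ^ ((j : ℝ) * s₀ x) *
      (2 ^ ((j : ℝ) * n * ((p₀ x)⁻¹).toReal))⁻¹ * 2 ^ ((j : ℝ) * n * ((p₁ x)⁻¹).toReal) := by
    rw [← ENNReal.rpow_neg, ← ENNReal.rpow_add _ _ (by norm_num) (by norm_num),
      ← ENNReal.rpow_add _ _ (by norm_num) (by norm_num)]
    congr 1
    linear_combination (-(j : ℝ)) * hsobolev x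
  have h3R : ((lam / 3) ^ ((q x)⁻¹).toReal)⁻¹ ≤ 3 ^ R * (lam ^ ((q x)⁻¹).toReal)⁻¹ := by
    rw [ENNReal.div_rpow_of_nonneg _ _ (hr0 x), ENNReal.inv_div (by simp) (by simp),
      div_eq_mul_inv]
    gcongr
    · norm_num
    · exact hr x
  have hCi : C⁻¹ * 3 ^ R = M⁻¹ := by
    rw [hC, ENNReal.mul_inv (Or.inl hM0) (Or.inl hMt), mul_assoc,
      ENNReal.inv_mul_cancel (by simp) (by simp), mul_one]
  simp only [seqBlocks, div_eq_mul_inv (_ * _)]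
  rw [ENNReal.mul_inv (Or.inl hC0) (Or.inl hCt), hs1, ← hCi]
  refine (mul_le_mul_right h3R _).trans (le_of_eq ?_)
  ring

/-! ### Summation over levels -/

/-- **Sobolev embedding for variable-exponent Besov sequence spaces.**
If `p₀, p₁, q ∈ P^{log}`, `s₀, s₁` are locally log-Hölder continuous, `s₀ ≥ s₁`,
`p₀ ≤ p₁` pointwise and `s₀(x) − n/p₀(x) = s₁(x) − n/p₁(x)` for all `x`, then
`b^{s₀(·)}_{p₀(·),q(·)}(ℝⁿ) ↪ b^{s₁(·)}_{p₁(·),q(·)}(ℝⁿ)`. -/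
theorem sobolev_embedding_variable_besov (n : ℕ) (hn : 0 < n)
    (p₀ p₁ q : EuclideanSpace ℝ (Fin n) → ℝ≥0∞)
    (s₀ s₁ : EuclideanSpace ℝ (Fin n) → ℝ)
    (hp₀ : PLog p₀) (hp₁ : PLog p₁) (hq : PLog q)
    (hs₀ : LocLogHolder s₀) (hs₁ : LocLogHolder s₁)
    (hs : ∀ x, s₁ x ≤ s₀ x) (hp : ∀ x, p₀ x ≤ p₁ x)
    (hsobolev : ∀ x, s₀ x - n * ((p₀ x)⁻¹).toReal = s₁ x - n * ((p₁ x)⁻¹).toReal) :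
    ∃ C : ℝ≥0, 0 < C ∧ ∀ γ : ℕ → (Fin n → ℤ) → ℂ,
      bVarNorm n s₁ p₁ q γ ≤ C * bVarNorm n s₀ p₀ q γ := by
  obtain ⟨C, hC, key⟩ := level_embed n hn p₀ p₁ q s₀ s₁ hp₀ hp₁ hq hs₀ hp hsobolev
  have hC0 : (C : ℝ≥0∞) ≠ 0 := by simpa using hC.ne'
  refine ⟨C, hC, fun γ => ?_⟩
  rw [← ENNReal.inv_mul_le_iff hC0 ENNReal.coe_ne_top]
  refine le_sInf ?_
  rintro mu ⟨hmu, hmod⟩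
  rw [ENNReal.inv_mul_le_iff hC0 ENNReal.coe_ne_top]
  rcases eq_or_ne mu ∞ with rfl | hmut
  · rw [ENNReal.mul_top hC0]
    exact le_top
  refine sInf_le ⟨ENNReal.mul_pos hC0 hmu.ne', ?_⟩
  unfold mixedModular at hmod ⊢
  set I : ℕ → ℝ≥0∞ := fun ν => sInf {lam : ℝ≥0∞ | 0 < lam ∧
    varModular p₀ (fun x => seqBlocks s₀ γ ν x / mu / lam ^ ((q x)⁻¹).toReal) ≤ 1} with hI
  have hI1 : ∀ ν, I ν ≤ 1 := fun ν => (ENNReal.le_tsum ν).trans hmod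
  have h2j : ∀ ν : ℕ, (2 : ℝ≥0∞) ^ (-(ν : ℝ)) = 2⁻¹ ^ ν := fun ν => by
    rw [ENNReal.rpow_neg, ENNReal.rpow_natCast, ENNReal.inv_pow]
  have hpos : ∀ ν : ℕ, (0 : ℝ≥0∞) < 2⁻¹ ^ ν := fun ν => by
    rw [← h2j]
    exact ENNReal.rpow_pos (by norm_num) (by simp)
  -- `I ν + 2^{-ν}` exceeds the infimum `I ν`, hence is admissible by monotonicity
  have hadm : ∀ ν, varModular p₀ (fun x => seqBlocks s₀ γ ν x / mu /
      (I ν + 2⁻¹ ^ ν) ^ ((q x)⁻¹).toReal) ≤ 1 := by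
    intro ν
    have hlt : I ν < I ν + 2⁻¹ ^ ν :=
      ENNReal.lt_add_right (ne_top_of_le_ne_top one_ne_top (hI1 ν)) (hpos ν).ne'
    obtain ⟨lam, ⟨-, hlam⟩, hlt⟩ := sInf_lt_iff.1 hlt
    refine (varModular_mono p₀ fun x => ?_).trans hlam
    exact ENNReal.div_le_div_left (ENNReal.rpow_le_rpow hlt.le ENNReal.toReal_nonneg) _
  calc _ ≤ ∑' ν, (I ν + 2⁻¹ ^ ν) / 3 := by
        refine ENNReal.tsum_le_tsum fun ν => sInf_le ⟨?_, ?_⟩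
        · exact ENNReal.div_pos ((hpos ν).trans_le le_add_self).ne' (by simp)
        · refine key γ ν mu _ hmu.ne' hmut ?_ ?_ (hadm ν)
          · rw [h2j]
            exact le_add_self
          · rw [← one_add_one_eq_two]
            exact add_le_add (hI1 ν) (pow_le_one' (by simp) ν)
    _ = (∑' ν, I ν + ∑' ν : ℕ, (2⁻¹ : ℝ≥0∞) ^ ν) / 3 := by
        simp only [div_eq_mul_inv]
        rw [ENNReal.tsum_mul_right, ENNReal.tsum_add]
    _ ≤ (1 + 2) / 3 := by
        gcongr
        rw [ENNReal.tsum_geometric, ENNReal.one_sub_inv_two, inv_inv]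
    _ = 1 := by
        rw [show (1 + 2 : ℝ≥0∞) = 3 by norm_num]
        exact ENNReal.div_self (by norm_num) (by norm_num)

end
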